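/- arXiv:1409.5689 — 2 statements merged into one kernel-verified Lean document; each statement's English description precedes it below -/
import Mathlib

section
/- Let Ω ⊆ ℝ^d be a bounded open set which has infinitely many connected components (Ω_k)_{k∈ℕ}, and suppose the closures of the Ω_k are pairwise disjoint. Suppose μ assigns to each z ∈ ∂Ω a Borel probability measure μ(z) on Ω, such that μ(z)(Ω_k) = 1 for every k ∈ ℕ and every z ∈ ∂Ω_k. Then the map z ↦ μ(z) is not σ(M(Ω), C_b(Ω))-continuous, i.e. it is not continuous from ∂Ω into the Borel probability measures on Ω equipped with the weak topology generated by the bounded continuous functions on Ω. -/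
open MeasureTheory

/-!
Each component `U i` is clopen in `⋃ i, U i`, so testing weak continuity against its indicator
shows that `z ↦ μ z (U i)` is continuous on the boundary. Connectedness of the space provides a
boundary point `z i` of each component; let `a` be a cluster point of these points. For fixed `j`,
the measure `μ (z i)` is concentrated on `U i`, hence does not charge `U j`, for every `i ≠ j`; in
the limit `μ a (U j) = 0`. By countable additivity `μ a` vanishes on the whole union, although it
is a probability measure concentrated there.
-/

open Filter Set Topology

section Topology

variable {X : Type*} [TopologicalSpace X]

theorem frontier_nonempty_of_disjoint [PreconnectedSpace X] {s t : Set X} (hs : s.Nonempty)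
    (ht : t.Nonempty) (hst : Disjoint s t) : (frontier s).Nonempty :=
  have hs_ne_univ : s ≠ univ := fun h => ht.ne_empty (univ_disjoint.1 (h ▸ hst))
  nonempty_frontier_iff.2 ⟨hs, hs_ne_univ⟩

theorem frontier_subset_frontier_iUnion_of_pairwise_disjoint {ι : Type*} {U : ι → Set X}
    (hopen : ∀ i, IsOpen (U i)) (hdisj : Pairwise fun i j => Disjoint (U i) (U j)) (i : ι) :
    frontier (U i) ⊆ frontier (⋃ j, U j) := by
  rw [(hopen i).frontier_eq, (isOpen_iUnion hopen).frontier_eq]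
  rintro x ⟨hx_closure, hx_notMem⟩
  refine ⟨closure_mono (subset_iUnion U i) hx_closure, fun hx_iUnion => ?_⟩
  obtain ⟨j, hxj⟩ := mem_iUnion.1 hx_iUnion
  obtain rfl | hij := eq_or_ne i j
  · exact hx_notMem hxj
  · exact ((hdisj hij).closure_left (hopen j)).notMem_of_mem_left hx_closure hxj

theorem continuousOn_indicator_const_of_disjoint_frontier {M : Type*} [TopologicalSpace M] [Zero M]
    {s t : Set X} (h : Disjoint (frontier s) t) (c : M) :
    ContinuousOn (s.indicator fun _ => c) t := by
  classical
  rw [← piecewise_eq_indicator]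
  exact ContinuousOn.piecewise
    (fun x hx => (h.notMem_of_mem_left hx.2 hx.1).elim) continuousOn_const continuousOn_const

end Topology

section Measure

variable {X Z : Type*} [TopologicalSpace Z] [MeasurableSpace X]

/-- Continuity on `S` of `z ↦ μ z` for the weak topology `σ(M(t), C_b(t))` of measures on `t`.
A test function is encoded as a total function on `X` whose values outside `t` are irrelevant. -/
def WeaklyContinuousOn [TopologicalSpace X] (μ : Z → Measure X) (t : Set X) (S : Set Z) : Prop :=
  ∀ f : X → ℝ, ContinuousOn f t → (∃ C : ℝ, ∀ x ∈ t, |f x| ≤ C) →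
    ContinuousOn (fun z => ∫ x in t, f x ∂(μ z)) S

variable {μ : Z → Measure X} {S : Set Z}

theorem WeaklyContinuousOn.continuousOn_measure [TopologicalSpace X] {s t : Set X}
    (hweak : WeaklyContinuousOn μ t S) (hfin : ∀ z ∈ S, IsFiniteMeasure (μ z))
    (hs : MeasurableSet s) (hst : s ⊆ t) (hfrontier : Disjoint (frontier s) t) :
    ContinuousOn (fun z => μ z s) S := by
  have hbound : ∀ x ∈ t, |s.indicator (fun _ => (1 : ℝ)) x| ≤ 1 := fun x _ => by
    by_cases hx : x ∈ s <;> simp [hx]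
  have hcont := hweak _ (continuousOn_indicator_const_of_disjoint_frontier hfrontier 1) ⟨1, hbound⟩
  refine (ENNReal.continuous_ofReal.comp_continuousOn hcont).congr fun z hz => ?_
  have := hfin z hz
  have hintegral : ∫ x in t, s.indicator (fun _ => (1 : ℝ)) x ∂(μ z) = (μ z).real s := by
    rw [setIntegral_indicator hs, inter_eq_self_of_subset_right hst, setIntegral_const,
      smul_eq_mul, mul_one]
  rw [Function.comp_apply, hintegral, ofReal_measureReal]

theorem exists_measure_iUnion_eq_zero_of_isCompact {ι : Type*} [Countable ι] [Infinite ι]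
    (hS : IsCompact S) {U : ι → Set X} (hcont : ∀ j, ContinuousOn (fun z => μ z (U j)) S)
    {z : ι → Z} (hzS : ∀ i, z i ∈ S) (hz : Pairwise fun i j => μ (z i) (U j) = 0) :
    ∃ a ∈ S, μ a (⋃ j, U j) = 0 := by
  have hzS_eventually : ∀ᶠ i in hyperfilter ι, z i ∈ S := Eventually.of_forall hzS
  obtain ⟨a, haS, hza⟩ := hS.ultrafilter_le_nhds' ((hyperfilter ι).map z) hzS_eventually
  refine ⟨a, haS, measure_iUnion_null fun j => ?_⟩
  have hlim : Tendsto (fun i => μ (z i) (U j)) (hyperfilter ι) (𝓝 (μ a (U j))) :=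
    (hcont j a haS).tendsto.comp (tendsto_nhdsWithin_iff.2 ⟨hza, hzS_eventually⟩)
  have hzero : (fun i => μ (z i) (U j)) =ᶠ[hyperfilter ι] fun _ => 0 :=
    hyperfilter_le_cofinite ((eventually_cofinite_ne j).mono fun i hij => hz hij)
  exact tendsto_nhds_unique hlim (tendsto_const_nhds.congr' hzero.symm)

end Measure

theorem no_weak_continuity_of_disconnected_components_general
    {X : Type*} [TopologicalSpace X] [PreconnectedSpace X] [MeasurableSpace X]
    [OpensMeasurableSpace X] {ι : Type*} [Countable ι] [Infinite ι] {U : ι → Set X}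
    (hopen : ∀ i, IsOpen (U i)) (hne : ∀ i, (U i).Nonempty)
    (hdisj : Pairwise fun i j => Disjoint (U i) (U j))
    (hcompact : IsCompact (frontier (⋃ i, U i))) {μ : X → Measure X}
    (hprob : ∀ z ∈ frontier (⋃ i, U i), IsProbabilityMeasure (μ z))
    (hsupp : ∀ z ∈ frontier (⋃ i, U i), μ z (⋃ i, U i)ᶜ = 0)
    (hjump : ∀ i, ∀ z ∈ frontier (U i), μ z (U i) = 1) :
    ¬ WeaklyContinuousOn μ (⋃ i, U i) (frontier (⋃ i, U i)) := by
  intro hweak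
  have hsub := frontier_subset_frontier_iUnion_of_pairwise_disjoint hopen hdisj
  have hΩ : IsOpen (⋃ i, U i) := isOpen_iUnion hopen
  have hcont (i : ι) : ContinuousOn (fun z => μ z (U i)) (frontier (⋃ i, U i)) :=
    hweak.continuousOn_measure (fun z hz => have := hprob z hz; inferInstance)
      (hopen i).measurableSet (subset_iUnion U i)
      ((disjoint_frontier_iff_isOpen.2 hΩ).mono_left (hsub i))
  have hfrontier (i : ι) : (frontier (U i)).Nonempty :=
    have ⟨j, hji⟩ := exists_ne i
    frontier_nonempty_of_disjoint (hne i) (hne j) (hdisj hji.symm)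
  choose z hz using hfrontier
  have hnull : Pairwise fun i j => μ (z i) (U j) = 0 := fun i j hij =>
    have := hprob _ (hsub i (hz i))
    measure_mono_null (hdisj hij).subset_compl_left
      ((prob_compl_eq_zero_iff (hopen i).measurableSet).2 (hjump i _ (hz i)))
  obtain ⟨a, ha, hzero⟩ :=
    exists_measure_iUnion_eq_zero_of_isCompact hcompact hcont (fun i => hsub i (hz i)) hnull
  have := hprob a ha
  exact zero_ne_one (hzero.symm.trans ((prob_compl_eq_zero_iff hΩ.measurableSet).1 (hsupp a ha)))

/-- let `Ω ⊆ ℝ^d` be a bounded open set with infinitely many connected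
components `Ω_k` (pairwise disjoint nonempty open connected sets with pairwise disjoint
closures whose union is `Ω`). Suppose `μ` assigns to each `z ∈ ∂Ω = closure Ω \ Ω` a Borel
probability measure on `Ω` such that `μ(z)(Ω_k) = 1` whenever `z ∈ ∂Ω_k`. Then `z ↦ μ(z)`
is not `σ(M(Ω), C_b(Ω))`-continuous on `∂Ω`: it is not the case that for every bounded
continuous function `f` on `Ω` the map `z ↦ ∫_Ω f dμ(z)` is continuous on `∂Ω`. -/
theorem no_weak_continuity_of_disconnected_components
    {d : ℕ} (Ω : Set (EuclideanSpace ℝ (Fin d)))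
    (hΩo : IsOpen Ω) (hΩb : Bornology.IsBounded Ω)
    (Ωc : ℕ → Set (EuclideanSpace ℝ (Fin d)))
    (hopen : ∀ k, IsOpen (Ωc k))
    (hne : ∀ k, (Ωc k).Nonempty)
    (hconn : ∀ k, IsPreconnected (Ωc k))
    (hunion : (⋃ k, Ωc k) = Ω)
    (hdisj : Pairwise fun i j => Disjoint (closure (Ωc i)) (closure (Ωc j)))
    (μ : EuclideanSpace ℝ (Fin d) → Measure (EuclideanSpace ℝ (Fin d)))
    (hprob : ∀ z ∈ closure Ω \ Ω, IsProbabilityMeasure (μ z))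
    (hsupp : ∀ z ∈ closure Ω \ Ω, μ z Ωᶜ = 0)
    (hjump : ∀ k, ∀ z ∈ closure (Ωc k) \ Ωc k, μ z (Ωc k) = 1) :
    ¬ ∀ f : EuclideanSpace ℝ (Fin d) → ℝ, ContinuousOn f Ω → (∃ C : ℝ, ∀ x ∈ Ω, |f x| ≤ C) →
        ContinuousOn (fun z => ∫ x in Ω, f x ∂(μ z)) (closure Ω \ Ω) := by
  subst hunion
  have hcompact : IsCompact (frontier (⋃ k, Ωc k)) :=
    hΩb.isCompact_closure.of_isClosed_subset isClosed_frontier frontier_subset_closure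
  simp only [← hΩo.frontier_eq, ← (hopen _).frontier_eq] at hprob hsupp hjump ⊢
  exact no_weak_continuity_of_disconnected_components_general hopen hne
    (fun i j hij => (hdisj hij).mono subset_closure subset_closure) hcompact hprob hsupp hjump
end

section
/- Let A be the generator of a holomorphic semigroup T on a complex Banach space X. Assume there exists ε > 0 such that σ(A) ∩ {λ ∈ ℂ : Re λ ≥ −ε} = {0}, and that 0 is a pole of order 1 of the resolvent λ ↦ R(λ,A), with residue P (the spectral projection of A associated with {0}). Then T(t)P = P for all t > 0, and there exist constants M ≥ 1 and ε' > 0 such that ‖T(t) − P‖ ≤ M e^{−ε' t} for all t > 0. -/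
open MeasureTheory Set

variable {X : Type*} [NormedAddCommGroup X] [NormedSpace ℂ X] [CompleteSpace X]

/-- `R` is the resolvent operator `R(l, A) = (l - A)⁻¹` of the (unbounded) operator `A`. -/
def IsResolventOf (A : X →ₗ.[ℂ] X) (l : ℂ) (R : X →L[ℂ] X) : Prop :=
  (∀ x : X, ∃ hx : R x ∈ A.domain, l • R x - A ⟨R x, hx⟩ = x) ∧
  (∀ y : A.domain, R (l • (y : X) - A y) = (y : X))

/-- `T` is a semigroup of type `(M, ω)`. -/
def IsSemigroupOfType (T : ℝ → X →L[ℂ] X) (M ω : ℝ) : Prop :=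
  (∀ x : X, ContinuousOn (fun t => T t x) (Set.Ioi 0)) ∧
  (∀ s t : ℝ, 0 < s → 0 < t → T (s + t) = (T s).comp (T t)) ∧
  (0 < M ∧ ∀ t : ℝ, 0 < t → ‖T t‖ ≤ M * Real.exp (ω * t)) ∧
  (∀ x : X, (∀ t : ℝ, 0 < t → T t x = 0) → x = 0)

/-- `A` is the generator of the semigroup `T` of type `(M, ω)`. -/
def IsGeneratorOf (A : X →ₗ.[ℂ] X) (T : ℝ → X →L[ℂ] X) (ω : ℝ) : Prop :=
  ∀ l : ℝ, ω < l → ∃ R : X →L[ℂ] X, IsResolventOf A (l : ℂ) R ∧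
    ∀ x : X, R x = ∫ t in Set.Ioi (0 : ℝ), Real.exp (-l * t) • T t x

/-- `A` generates the semigroup `T` (of some type `(M, ω)`). -/
def Generates (A : X →ₗ.[ℂ] X) (T : ℝ → X →L[ℂ] X) : Prop :=
  ∃ M ω : ℝ, IsSemigroupOfType T M ω ∧ IsGeneratorOf A T ω

/-- The open sector `Σ_θ = {r e^{iφ} : r > 0, |φ| < θ}`. -/
def Sector (θ : ℝ) : Set ℂ := {z : ℂ | z ≠ 0 ∧ |Complex.arg z| < θ}

/-- The semigroup `T` is holomorphic: it extends to a holomorphic function on a sector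
`Σ_θ` (for some `0 < θ ≤ π/2`) which is bounded on `Σ_θ ∩ {|z| ≤ 1}`. -/
def IsHolomorphicSG (T : ℝ → X →L[ℂ] X) : Prop :=
  ∃ θ : ℝ, 0 < θ ∧ θ ≤ Real.pi / 2 ∧ ∃ S : ℂ → X →L[ℂ] X,
    DifferentiableOn ℂ S (Sector θ) ∧
    (∀ t : ℝ, 0 < t → S (t : ℂ) = T t) ∧
    (∃ C : ℝ, ∀ z ∈ Sector θ, ‖z‖ ≤ 1 → ‖S z‖ ≤ C)

/-- The spectrum of the (unbounded) operator `A`: the complement of the resolvent set. -/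
def spectrumOf (A : X →ₗ.[ℂ] X) : Set ℂ :=
  {l : ℂ | ¬ ∃ R : X →L[ℂ] X, IsResolventOf A l R}

/-!
The resolvent restricted to the range of `1 - P` has no pole at `l₀`, and the resolvent identity
extends across `l₀` by continuity. So the generator of `U t = T t (1 - P)` has its spectrum in
`Re l < α`. Norm-continuity of `U` gives the spectral mapping inclusion `σ(U t) \ {0} ⊆ e^{t σ}`:
a functional `L` that is multiplicative on the bicommutant of `U` and takes the value `c` at the
Laplace transform `∫_0^∞ e^{-μs} U s ds` satisfies `c L(e^{-μt} U t) = ∫_t^∞ L(e^{-μs} U s) ds`,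
which forces `L(U t) = e^{at}` with `c = 1 / (μ - a)`, or `L(U t) = 0` if `c = 0`. Gelfand's
formula for the spectral radius of `U 1` then bounds the growth of `U`. The same integral equation,
with multiplication by `P` in place of `L`, yields `T t P = e^{l₀ t} P`.
-/

open Filter Topology

section ImproperIntegral

variable {E : Type*} [NormedAddCommGroup E]

theorem hasDerivAt_integral_Ioi [NormedSpace ℝ E] [CompleteSpace E] {f : ℝ → E} {a t : ℝ}
    (hc : ContinuousOn f (Ioi a)) (hi : IntegrableOn f (Ioi a)) (ht : a < t) :
    HasDerivAt (fun u => ∫ s in Ioi u, f s) (-f t) t := by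
  have hprim : HasDerivAt (fun u => ∫ s in a..u, f s) (f t) t :=
    intervalIntegral.integral_hasDerivAt_right
      ((intervalIntegrable_iff_integrableOn_Ioc_of_le ht.le).2 (hi.mono_set Ioc_subset_Ioi_self))
      (hc.stronglyMeasurableAtFilter isOpen_Ioi t ht) (hc.continuousAt (Ioi_mem_nhds ht))
  refine (hprim.const_sub (∫ s in Ioi a, f s)).congr_of_eventuallyEq ?_
  filter_upwards [Ioi_mem_nhds ht] with u hu
  rw [← intervalIntegral.integral_Ioi_sub_Ioi hi (le_of_lt hu), sub_sub_cancel]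

theorem eq_zero_of_integral_Ioi_eq_zero [NormedSpace ℝ E] [CompleteSpace E] {f : ℝ → E} {a t : ℝ}
    (hc : ContinuousOn f (Ioi a)) (hi : IntegrableOn f (Ioi a))
    (h : ∀ u, a < u → ∫ s in Ioi u, f s = 0) (ht : a < t) : f t = 0 := by
  have hconst : HasDerivAt (fun u => ∫ s in Ioi u, f s) 0 t := by
    refine (hasDerivAt_const t (0 : E)).congr_of_eventuallyEq ?_
    filter_upwards [Ioi_mem_nhds ht] with u hu using h u hu
  exact neg_eq_zero.1 ((hasDerivAt_integral_Ioi hc hi ht).unique hconst)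

theorem integral_Ioi_eq_exp_smul [NormedSpace ℂ E] [CompleteSpace E] {f : ℝ → E} {w : ℂ} {t : ℝ}
    (hc : ContinuousOn f (Ioi 0)) (hi : IntegrableOn f (Ioi 0))
    (h : ∀ t, 0 < t → f t = w • ∫ s in Ioi t, f s) (ht : 0 < t) :
    ∫ s in Ioi t, f s = Complex.exp (-w * t) • ∫ s in Ioi 0, f s := by
  set g : ℝ → E := fun u => ∫ s in Ioi u, f s
  set k : ℝ → E := fun u => Complex.exp (w * u) • g u with hk
  have hderiv : ∀ u ∈ Ioi (0 : ℝ), HasDerivAt k 0 u := by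
    intro u hu
    have hexp : HasDerivAt (fun u : ℝ => Complex.exp (w * u)) (Complex.exp (w * u) * (w * 1)) u :=
      ((Complex.ofRealCLM.hasDerivAt (x := u)).const_mul w).cexp
    refine (hexp.smul (hasDerivAt_integral_Ioi hc hi hu)).congr_deriv ?_
    rw [h u hu, smul_neg, mul_one, smul_smul, neg_add_cancel]
  have hconst : EqOn k (fun _ => k t) (Ioi 0) := fun u hu =>
    isOpen_Ioi.is_const_of_deriv_eq_zero isPreconnected_Ioi
      (fun v hv => (hderiv v hv).differentiableAt.differentiableWithinAt)
      (fun v hv => (hderiv v hv).deriv) hu ht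
  have hkc : ContinuousOn k (Ici 0) :=
    (Continuous.continuousOn (by fun_prop)).smul hi.continuousOn_Ici_primitive_Ioi
  have hk0 : k 0 = k t := hconst.of_subset_closure hkc continuousOn_const Ioi_subset_Ici_self
    (closure_Ioi (0 : ℝ)).ge self_mem_Ici
  calc g t = Complex.exp (-w * t) • k t := by
        rw [hk, smul_smul, ← Complex.exp_add, neg_mul, neg_add_cancel, Complex.exp_zero, one_smul]
    _ = Complex.exp (-w * t) • g 0 := by
        rw [← hk0, hk]
        simp only [Complex.ofReal_zero, mul_zero, Complex.exp_zero, one_smul]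

end ImproperIntegral

section LaplaceTransform

variable {E : Type*} [NormedAddCommGroup E] [NormedSpace ℝ E]

/-- The Laplace transform `∫₀^∞ e^{-μt} f(t) dt` of a vector-valued function; for a semigroup with
generator `A` this is the resolvent `R(μ, A)`. -/
noncomputable def laplaceTransform (f : ℝ → E) (μ : ℝ) : E :=
  ∫ t in Ioi (0 : ℝ), Real.exp (-μ * t) • f t

theorem continuousOn_exp_smul {f : ℝ → E} {s : Set ℝ} (hf : ContinuousOn f s) (μ : ℝ) :
    ContinuousOn (fun t => Real.exp (-μ * t) • f t) s :=
  (Continuous.continuousOn (by fun_prop)).smul hf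

theorem integrableOn_exp_smul {f : ℝ → E} {M ω μ : ℝ} (hc : ContinuousOn f (Ioi 0))
    (hb : ∀ t, 0 < t → ‖f t‖ ≤ M * Real.exp (ω * t)) (hμ : ω < μ) :
    IntegrableOn (fun t => Real.exp (-μ * t) • f t) (Ioi 0) := by
  have hmajorant : IntegrableOn (fun t : ℝ => M * Real.exp ((ω - μ) * t)) (Ioi 0) :=
    (integrableOn_exp_mul_Ioi (by linarith) 0).const_mul M
  refine hmajorant.mono' ((continuousOn_exp_smul hc μ).aestronglyMeasurable measurableSet_Ioi)
    ((ae_restrict_iff' measurableSet_Ioi).2 (.of_forall fun t ht => ?_))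
  calc ‖Real.exp (-μ * t) • f t‖ = Real.exp (-μ * t) * ‖f t‖ := by
        rw [norm_smul, Real.norm_eq_abs, Real.abs_exp]
    _ ≤ Real.exp (-μ * t) * (M * Real.exp (ω * t)) := by gcongr; exact hb t ht
    _ = M * Real.exp ((ω - μ) * t) := by
        rw [show (ω - μ) * t = -μ * t + ω * t by ring, Real.exp_add]; ring

theorem exp_smul_integral_exp_smul_comp_add (f : ℝ → E) (μ t : ℝ) :
    Real.exp (-μ * t) • ∫ s in Ioi (0 : ℝ), Real.exp (-μ * s) • f (s + t) =
      ∫ s in Ioi t, Real.exp (-μ * s) • f s := by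
  have htranslate := (measurePreserving_add_right volume t).setIntegral_preimage_emb
    (measurableEmbedding_addRight t) (fun s => Real.exp (-μ * s) • f s) (Ioi t)
  rw [preimage_add_const_Ioi, sub_self] at htranslate
  rw [← htranslate, ← integral_smul]
  refine integral_congr_ae (.of_forall fun s => ?_)
  simp only [smul_smul, ← Real.exp_add]
  ring_nf

end LaplaceTransform

theorem mul_mul_mul_of_isIdempotentElem {S : Type*} [Semigroup S] {a b e : S}
    (he : IsIdempotentElem e) (hb : Commute b e) : a * e * (b * e) = a * b * e := by
  rw [mul_assoc a e, ← mul_assoc e, ← hb.eq, mul_assoc b, he.eq, mul_assoc]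

section BanachAlgebra

variable {𝒜 : Type*} [NormedRing 𝒜]

/-- A norm-continuous semigroup of type `(M, ω)` in a normed algebra. For `𝒜 = X →L[ℂ] X` these are
the semigroups that are continuous on `(0, ∞)` in operator norm, as holomorphic ones are. No
continuity at `0` is asked for. -/
structure IsNormContinuousSemigroup (T : ℝ → 𝒜) (M ω : ℝ) : Prop where
  continuousOn : ContinuousOn T (Ioi 0)
  map_add : ∀ s t, 0 < s → 0 < t → T (s + t) = T s * T t
  norm_le : ∀ t, 0 < t → ‖T t‖ ≤ M * Real.exp (ω * t)

namespace IsNormContinuousSemigroup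

variable {T : ℝ → 𝒜} {M ω μ t : ℝ}

theorem commute (hT : IsNormContinuousSemigroup T M ω) {s : ℝ} (hs : 0 < s) (ht : 0 < t) :
    Commute (T s) (T t) := by
  rw [Commute, SemiconjBy, ← hT.map_add s t hs ht, add_comm, hT.map_add t s ht hs]

theorem mul_right (hT : IsNormContinuousSemigroup T M ω) {e : 𝒜} (he : IsIdempotentElem e)
    (hcomm : ∀ t, 0 < t → Commute (T t) e) :
    IsNormContinuousSemigroup (fun t => T t * e) (M * ‖e‖) ω where
  continuousOn := hT.continuousOn.mul continuousOn_const
  map_add s t hs ht := by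
    rw [hT.map_add s t hs ht, mul_mul_mul_of_isIdempotentElem he (hcomm t ht)]
  norm_le t ht := calc
    ‖T t * e‖ ≤ ‖T t‖ * ‖e‖ := norm_mul_le _ _
    _ ≤ M * Real.exp (ω * t) * ‖e‖ := by gcongr; exact hT.norm_le t ht
    _ = M * ‖e‖ * Real.exp (ω * t) := by ring

variable [NormedAlgebra ℂ 𝒜]

theorem integrableOn (hT : IsNormContinuousSemigroup T M ω) (hμ : ω < μ) :
    IntegrableOn (fun t => Real.exp (-μ * t) • T t) (Ioi 0) :=
  integrableOn_exp_smul hT.continuousOn hT.norm_le hμ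

theorem mul_laplaceTransform (hT : IsNormContinuousSemigroup T M ω) (hμ : ω < μ) (b : 𝒜) :
    b * laplaceTransform T μ = laplaceTransform (fun t => b * T t) μ := by
  simp only [laplaceTransform, ← integral_const_mul_of_integrable (hT.integrableOn hμ),
    mul_smul_comm]

theorem laplaceTransform_mul (hT : IsNormContinuousSemigroup T M ω) (hμ : ω < μ) (b : 𝒜) :
    laplaceTransform T μ * b = laplaceTransform (fun t => T t * b) μ := by
  simp only [laplaceTransform, ← integral_mul_const_of_integrable (hT.integrableOn hμ),
    smul_mul_assoc]

theorem commute_laplaceTransform (hT : IsNormContinuousSemigroup T M ω) (hμ : ω < μ) {b : 𝒜}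
    (hb : ∀ t, 0 < t → Commute b (T t)) : Commute b (laplaceTransform T μ) := by
  rw [Commute, SemiconjBy, hT.mul_laplaceTransform hμ, hT.laplaceTransform_mul hμ]
  refine setIntegral_congr_fun measurableSet_Ioi fun t ht => ?_
  simp only [(hb t ht).eq]

theorem exp_smul_mul_laplaceTransform (hT : IsNormContinuousSemigroup T M ω) (hμ : ω < μ)
    (ht : 0 < t) :
    Real.exp (-μ * t) • (T t * laplaceTransform T μ) = ∫ s in Ioi t, Real.exp (-μ * s) • T s := by
  rw [hT.mul_laplaceTransform hμ, ← exp_smul_integral_exp_smul_comp_add, laplaceTransform]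
  congr 1
  refine setIntegral_congr_fun measurableSet_Ioi fun s hs => ?_
  simp only [add_comm s, hT.map_add t s ht hs]

variable [CompleteSpace 𝒜] {E : Type*} [NormedAddCommGroup E] [NormedSpace ℂ E] [CompleteSpace E]

theorem integral_Ioi_clm_apply (hT : IsNormContinuousSemigroup T M ω) (hμ : ω < μ) (L : 𝒜 →L[ℂ] E)
    (ht : 0 < t) :
    ∫ s in Ioi t, L (Real.exp (-μ * s) • T s) =
      Real.exp (-μ * t) • L (T t * laplaceTransform T μ) := by
  have hintegral := (hT.integrableOn hμ).mono_set (Ioi_subset_Ioi ht.le)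
  rw [L.integral_comp_comm hintegral, ← hT.exp_smul_mul_laplaceTransform hμ ht,
    L.map_smul_of_tower]

theorem clm_apply_eq_zero (hT : IsNormContinuousSemigroup T M ω) (hμ : ω < μ) (L : 𝒜 →L[ℂ] E)
    (hL : ∀ t, 0 < t → L (T t * laplaceTransform T μ) = 0) (ht : 0 < t) : L (T t) = 0 := by
  have hzero : L (Real.exp (-μ * t) • T t) = 0 :=
    eq_zero_of_integral_Ioi_eq_zero (f := fun s => L (Real.exp (-μ * s) • T s))
      (L.continuous.comp_continuousOn (continuousOn_exp_smul hT.continuousOn μ))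
      (L.integrable_comp (hT.integrableOn hμ))
      (fun u hu => by rw [hT.integral_Ioi_clm_apply hμ L hu, hL u hu, smul_zero]) ht
  rw [L.map_smul_of_tower] at hzero
  exact (smul_eq_zero.1 hzero).resolve_left (Real.exp_ne_zero _)

theorem clm_apply_eq_exp_smul (hT : IsNormContinuousSemigroup T M ω) (hμ : ω < μ) (L : 𝒜 →L[ℂ] E)
    {c : ℂ} (hc : c ≠ 0) (hL : ∀ t, 0 < t → L (T t * laplaceTransform T μ) = c • L (T t))
    (ht : 0 < t) :
    c • L (T t) = Complex.exp ((μ - c⁻¹) * t) • L (laplaceTransform T μ) := by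
  set f : ℝ → E := fun s => L (Real.exp (-μ * s) • T s) with hf
  have htail : ∀ t, 0 < t → ∫ s in Ioi t, f s = c • f t := fun t ht => by
    simp only [hf]
    rw [hT.integral_Ioi_clm_apply hμ L ht, hL t ht, smul_comm, L.map_smul_of_tower]
  have hdecay := integral_Ioi_eq_exp_smul (w := c⁻¹) (f := f)
    (L.continuous.comp_continuousOn (continuousOn_exp_smul hT.continuousOn μ))
    (L.integrable_comp (hT.integrableOn hμ))
    (fun t ht => by rw [htail t ht, inv_smul_smul₀ hc]) ht
  rw [htail t ht, hf, L.integral_comp_comm (hT.integrableOn hμ)] at hdecay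
  calc c • L (T t) = Real.exp (μ * t) • c • L (Real.exp (-μ * t) • T t) := by
        rw [L.map_smul_of_tower, smul_comm c, smul_smul, ← Real.exp_add, neg_mul, add_neg_cancel,
          Real.exp_zero, one_smul]
    _ = Complex.exp ((μ - c⁻¹) * t) • L (laplaceTransform T μ) := by
        rw [hdecay, ← laplaceTransform, ← Complex.coe_smul, smul_smul, Complex.ofReal_exp,
          ← Complex.exp_add]
        congr 2
        push_cast
        ring

theorem mul_eq_exp_smul (hT : IsNormContinuousSemigroup T M ω) (hμ : ω < μ) {a : ℂ}
    (ha : (μ : ℂ) ≠ a) {y : 𝒜} (hy : laplaceTransform T μ * y = ((μ : ℂ) - a)⁻¹ • y) (ht : 0 < t) :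
    T t * y = Complex.exp (a * t) • y := by
  have hc : ((μ : ℂ) - a)⁻¹ ≠ 0 := inv_ne_zero (sub_ne_zero.2 ha)
  have hexp := hT.clm_apply_eq_exp_smul hμ ((ContinuousLinearMap.mul ℂ 𝒜).flip y) hc
    (fun t _ => by
      simp only [ContinuousLinearMap.flip_apply, ContinuousLinearMap.mul_apply', mul_assoc, hy,
        mul_smul_comm]) ht
  simp only [ContinuousLinearMap.flip_apply, ContinuousLinearMap.mul_apply', hy, inv_inv,
    sub_sub_cancel] at hexp
  exact smul_right_injective 𝒜 hc (hexp.trans (smul_comm _ _ _))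

theorem mul_eq_exp_smul' (hT : IsNormContinuousSemigroup T M ω) (hμ : ω < μ) {a : ℂ}
    (ha : (μ : ℂ) ≠ a) {y : 𝒜} (hy : y * laplaceTransform T μ = ((μ : ℂ) - a)⁻¹ • y) (ht : 0 < t) :
    y * T t = Complex.exp (a * t) • y := by
  have hc : ((μ : ℂ) - a)⁻¹ ≠ 0 := inv_ne_zero (sub_ne_zero.2 ha)
  have hexp := hT.clm_apply_eq_exp_smul hμ (ContinuousLinearMap.mul ℂ 𝒜 y) hc
    (fun t ht => by
      rw [ContinuousLinearMap.mul_apply', (hT.commute_laplaceTransform hμ fun s hs =>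
        hT.commute ht hs).eq, ← mul_assoc, hy, smul_mul_assoc, ContinuousLinearMap.mul_apply']) ht
  simp only [ContinuousLinearMap.mul_apply', hy, inv_inv, sub_sub_cancel] at hexp
  exact smul_right_injective 𝒜 hc (hexp.trans (smul_comm _ _ _))

end IsNormContinuousSemigroup

end BanachAlgebra

section SpectralMapping

variable {𝒜 : Type*} [NormedRing 𝒜] [NormedAlgebra ℂ 𝒜] [CompleteSpace 𝒜]

theorem exists_clm_of_mem_spectrum {S : Subalgebra ℂ 𝒜} (hclosed : IsClosed (S : Set 𝒜))
    (hcomm : ∀ x ∈ S, ∀ y ∈ S, x * y = y * x) {a : 𝒜} (ha : a ∈ S) {z : ℂ}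
    (hz : z ∈ spectrum ℂ a) :
    ∃ L : 𝒜 →L[ℂ] ℂ, L a = z ∧ L 1 = 1 ∧ ∀ x ∈ S, ∀ y ∈ S, L (x * y) = L x * L y := by
  let _ : NormedCommRing S :=
    { (inferInstance : NormedRing S) with
      mul_comm := fun x y => Subtype.ext (hcomm x x.2 y y.2) }
  have : CompleteSpace S := hclosed.completeSpace_coe
  have hzS : z ∈ spectrum ℂ (⟨a, ha⟩ : S) := AlgHom.spectrum_apply_subset S.val ⟨a, ha⟩ hz
  obtain ⟨χ, hχ⟩ := WeakDual.CharacterSpace.mem_spectrum_iff_exists.1 hzS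
  obtain ⟨L, hL, -⟩ := exists_extension_norm_eq (Subalgebra.toSubmodule S)
    (WeakDual.CharacterSpace.toCLM χ)
  have hext : ∀ x : S, L x = χ x := fun x => hL x
  refine ⟨L, (hext ⟨a, ha⟩).trans hχ, (hext 1).trans (map_one χ), fun x hx y hy => ?_⟩
  calc L (x * y) = χ (⟨x, hx⟩ * ⟨y, hy⟩) := hext (⟨x, hx⟩ * ⟨y, hy⟩)
    _ = L x * L y := by rw [map_mul, ← hext, ← hext]

theorem IsNormContinuousSemigroup.exists_exp_eq_of_mem_spectrum {T : ℝ → 𝒜} {M ω μ t : ℝ}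
    (hT : IsNormContinuousSemigroup T M ω) (hμ : ω < μ) (ht : 0 < t) {z : ℂ} (hz₀ : z ≠ 0)
    (hz : z ∈ spectrum ℂ (T t)) :
    ∃ a : ℂ, Complex.exp (a * t) = z ∧ ¬IsUnit (1 - ((μ : ℂ) - a) • laplaceTransform T μ) := by
  -- The bicommutant of the semigroup is commutative and inverse-closed: it has enough characters
  -- to see the spectrum of `T t`, and a unit of `𝒜` lying in it cannot be annihilated by one.
  set G : Set 𝒜 := T '' Ioi 0
  set S : Subalgebra ℂ 𝒜 := Subalgebra.centralizer ℂ (Set.centralizer G)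
  have hcomm : ∀ x ∈ S, ∀ y ∈ S, x * y = y * x := by
    refine Set.centralizer_centralizer_comm_of_comm ?_
    rintro _ ⟨s, hs, rfl⟩ _ ⟨t, ht, rfl⟩
    exact hT.commute hs ht
  have hTS : ∀ s, 0 < s → T s ∈ S := fun s hs =>
    Set.subset_centralizer_centralizer (mem_image_of_mem T hs)
  have hRS : laplaceTransform T μ ∈ S := fun b hb =>
    hT.commute_laplaceTransform hμ fun s hs => (hb (T s) (mem_image_of_mem T hs)).symm
  obtain ⟨L, hLz, hL₁, hLmul⟩ := exists_clm_of_mem_spectrum (Set.isClosed_centralizer _) hcomm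
    (hTS t ht) hz
  set c : ℂ := L (laplaceTransform T μ)
  have hLT : ∀ s, 0 < s → L (T s * laplaceTransform T μ) = c • L (T s) := fun s hs => by
    rw [hLmul _ (hTS s hs) _ hRS, mul_comm, smul_eq_mul]
  have hc : c ≠ 0 := fun hc => hz₀ <| hLz ▸
    hT.clm_apply_eq_zero hμ L (fun s hs => by rw [hLT s hs, hc, zero_smul]) ht
  refine ⟨μ - c⁻¹, ?_, ?_⟩
  · have hexp := hT.clm_apply_eq_exp_smul hμ L hc hLT ht
    rw [smul_eq_mul, smul_eq_mul, mul_comm] at hexp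
    rw [← hLz, mul_right_cancel₀ hc hexp]
  · rw [sub_sub_cancel]
    rintro ⟨u, hu⟩
    have huS : (u : 𝒜) ∈ S := hu ▸ S.sub_mem S.one_mem (S.smul_mem hRS _)
    have huS' : ((u⁻¹ : 𝒜ˣ) : 𝒜) ∈ S := fun b hb => (Commute.units_inv_right (huS b hb)).eq
    have hLu : L u = 0 := by
      rw [hu, map_sub, hL₁, map_smul, smul_eq_mul, inv_mul_cancel₀ hc, sub_self]
    refine one_ne_zero (α := ℂ) ?_
    rw [← hL₁, ← u.mul_inv, hLmul _ huS _ huS', hLu, zero_mul]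

end SpectralMapping

section Growth

variable {𝒜 : Type*} [NormedRing 𝒜]

theorem exists_norm_pow_le_of_spectralRadius_lt [NormedAlgebra ℂ 𝒜] [CompleteSpace 𝒜] {a : 𝒜}
    {r : ℝ} (hr : 0 < r) (h : spectralRadius ℂ a < ENNReal.ofReal r) :
    ∃ C, ∀ n : ℕ, ‖a ^ n‖ ≤ C * r ^ n := by
  have hbigO : (fun n : ℕ => a ^ n) =O[atTop] (fun n : ℕ => r ^ n) := by
    refine Asymptotics.IsBigO.of_bound 1 ?_
    have hlim := spectrum.pow_norm_pow_one_div_tendsto_nhds_spectralRadius a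
    filter_upwards [hlim.eventually_lt_const h, eventually_gt_atTop 0] with n hn hn₀
    have hroot : ‖a ^ n‖ ^ (1 / n : ℝ) < r := (ENNReal.ofReal_lt_ofReal_iff hr).1 hn
    calc ‖a ^ n‖ = (‖a ^ n‖ ^ (1 / n : ℝ)) ^ n := by
          rw [one_div, Real.rpow_inv_natCast_pow (norm_nonneg _) hn₀.ne']
      _ ≤ r ^ n := by gcongr
      _ = 1 * ‖r ^ n‖ := by rw [one_mul, Real.norm_of_nonneg (by positivity)]
  obtain ⟨C, -, hC⟩ := Asymptotics.bound_of_isBigO_nat_atTop hbigO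
  refine ⟨C, fun n => ?_⟩
  simpa only [Real.norm_of_nonneg (pow_nonneg hr.le n)] using hC (x := n) (by positivity)

namespace IsNormContinuousSemigroup

variable {T : ℝ → 𝒜} {M ω μ t : ℝ}

theorem nonneg_const (hT : IsNormContinuousSemigroup T M ω) : 0 ≤ M :=
  nonneg_of_mul_nonneg_left ((norm_nonneg _).trans (hT.norm_le 1 one_pos)) (Real.exp_pos _)

theorem norm_le_of_le_one (hT : IsNormContinuousSemigroup T M ω) (ht : 0 < t) (ht₁ : t ≤ 1) :
    ‖T t‖ ≤ M * Real.exp |ω| := by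
  have hωt : ω * t ≤ |ω| := (mul_le_mul_of_nonneg_right (le_abs_self ω) ht.le).trans
    (mul_le_of_le_one_right (abs_nonneg ω) ht₁)
  have hM := hT.nonneg_const
  exact (hT.norm_le t ht).trans (by gcongr)

theorem map_add_natCast (hT : IsNormContinuousSemigroup T M ω) (ht : 0 < t) (n : ℕ) :
    T (t + n) = T t * T 1 ^ n := by
  induction n with
  | zero => rw [Nat.cast_zero, add_zero, pow_zero, mul_one]
  | succ n ih =>
    rw [Nat.cast_succ, ← add_assoc, hT.map_add (t + n) 1 (by positivity) one_pos, ih, mul_assoc,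
      pow_succ]

theorem exists_norm_le_of_norm_pow_le (hT : IsNormContinuousSemigroup T M ω) {C β : ℝ}
    (hC : ∀ n : ℕ, ‖T 1 ^ n‖ ≤ C * Real.exp β ^ n) :
    ∃ C', ∀ t, 0 < t → ‖T t‖ ≤ C' * Real.exp (β * t) := by
  have hM := hT.nonneg_const
  have hC₀ : 0 ≤ C := by simpa only [pow_zero, mul_one] using (norm_nonneg _).trans (hC 0)
  refine ⟨M * Real.exp |ω| * C * Real.exp |β|, fun t ht => ?_⟩
  obtain ⟨n, hn⟩ : ∃ n, ⌈t⌉₊ = n + 1 := Nat.exists_eq_succ_of_ne_zero (Nat.ceil_pos.2 ht).ne'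
  have hnt : (n : ℝ) < t := Nat.lt_ceil.1 (by omega)
  have htn : t ≤ n + 1 := by exact_mod_cast hn ▸ Nat.le_ceil t
  set s := t - n
  have hs : 0 < s := sub_pos.2 hnt
  have hs₁ : s ≤ 1 := by linarith
  have hexp : β * n ≤ |β| + β * t := by
    have : -β * s ≤ |β| := (mul_le_mul_of_nonneg_right (neg_le_abs β) hs.le).trans
      (mul_le_of_le_one_right (abs_nonneg β) hs₁)
    linarith [show β * n = -β * s + β * t by ring]
  calc ‖T t‖ = ‖T s * T 1 ^ n‖ := by rw [← hT.map_add_natCast hs, sub_add_cancel]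
    _ ≤ ‖T s‖ * ‖T 1 ^ n‖ := norm_mul_le _ _
    _ ≤ M * Real.exp |ω| * (C * Real.exp β ^ n) := by
        gcongr
        · exact hT.norm_le_of_le_one hs hs₁
        · exact hC n
    _ = M * Real.exp |ω| * C * Real.exp (β * n) := by
        rw [← Real.exp_nat_mul, mul_comm (n : ℝ)]; ring
    _ ≤ M * Real.exp |ω| * C * Real.exp (|β| + β * t) := by gcongr
    _ = M * Real.exp |ω| * C * Real.exp |β| * Real.exp (β * t) := by rw [Real.exp_add]; ring

theorem exists_norm_le_of_forall_isUnit [NormedAlgebra ℂ 𝒜] [CompleteSpace 𝒜]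
    (hT : IsNormContinuousSemigroup T M ω) (hμ : ω < μ) {α β : ℝ} (hαβ : α < β)
    (h : ∀ a : ℂ, α ≤ a.re → IsUnit (1 - ((μ : ℂ) - a) • laplaceTransform T μ)) :
    ∃ C, ∀ t, 0 < t → ‖T t‖ ≤ C * Real.exp (β * t) := by
  have hspec : ∀ z ∈ spectrum ℂ (T 1), ‖z‖ ≤ Real.exp α := by
    intro z hz
    rcases eq_or_ne z 0 with rfl | hz₀
    · rw [norm_zero]; positivity
    obtain ⟨a, rfl, ha⟩ := hT.exists_exp_eq_of_mem_spectrum hμ one_pos hz₀ hz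
    rw [Complex.ofReal_one, mul_one, Complex.norm_exp]
    exact Real.exp_le_exp.2 (not_le.1 fun hαa => ha (h a hαa)).le
  have hradius : spectralRadius ℂ (T 1) < ENNReal.ofReal (Real.exp β) := calc
    spectralRadius ℂ (T 1) ≤ ENNReal.ofReal (Real.exp α) := iSup₂_le fun z hz => by
        rw [← enorm_eq_nnnorm, ← ofReal_norm]
        exact ENNReal.ofReal_le_ofReal (hspec z hz)
    _ < ENNReal.ofReal (Real.exp β) :=
        (ENNReal.ofReal_lt_ofReal_iff (Real.exp_pos β)).2 (Real.exp_lt_exp.2 hαβ)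
  obtain ⟨C, hC⟩ := exists_norm_pow_le_of_spectralRadius_lt (Real.exp_pos β) hradius
  exact hT.exists_norm_le_of_norm_pow_le hC

end IsNormContinuousSemigroup

end Growth

section Laurent

variable {𝕜 E : Type*} [NontriviallyNormedField 𝕜] [NormedAddCommGroup E] [NormedSpace 𝕜 E]
  {f : 𝕜 → E} {l₀ : 𝕜}

theorem tendsto_of_hasSum_pow_smul {b : ℕ → E}
    (h : ∀ᶠ l in 𝓝[≠] l₀, HasSum (fun n => (l - l₀) ^ n • b n) (f l)) :
    Tendsto f (𝓝[≠] l₀) (𝓝 (b 0)) := by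
  classical
  have hseries : HasFPowerSeriesAt (Function.update f l₀ (b 0))
      (fun n => ContinuousMultilinearMap.mkPiRing 𝕜 (Fin n) (b n)) l₀ := by
    refine hasFPowerSeriesAt_iff'.2 ?_
    rw [eventually_nhdsWithin_iff] at h
    filter_upwards [h] with l hl
    rcases eq_or_ne l l₀ with rfl | hne
    · simpa [FormalMultilinearSeries.coeff] using HasSum.hasSum_at_zero b
    · simpa [FormalMultilinearSeries.coeff, hne] using hl hne
  exact continuousAt_update_same.1 hseries.continuousAt

theorem tendsto_sub_smul_of_tendsto_sub_inv_smul {P B : E}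
    (h : Tendsto (fun l => f l - (l - l₀)⁻¹ • P) (𝓝[≠] l₀) (𝓝 B)) :
    Tendsto (fun l => (l - l₀) • f l) (𝓝[≠] l₀) (𝓝 P) := by
  have hl : Tendsto (fun l => l - l₀) (𝓝[≠] l₀) (𝓝 0) :=
    tendsto_nhdsWithin_of_tendsto_nhds (by simpa using (continuous_sub_right l₀).tendsto l₀)
  have hlim := (hl.smul h).add_const P
  rw [zero_smul, zero_add] at hlim
  refine hlim.congr' ?_
  filter_upwards [self_mem_nhdsWithin] with l hne
  rw [smul_sub, smul_inv_smul₀ (sub_ne_zero.2 hne), sub_add_cancel]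

end Laurent

section Pseudoresolvent

theorem isUnit_one_sub_smul {𝕜 𝒜 : Type*} [CommRing 𝕜] [Ring 𝒜] [Algebra 𝕜 𝒜] {c : 𝕜} {a b : 𝒜}
    (hab : a - b = c • (a * b)) (hba : a - b = c • (b * a)) : IsUnit (1 - c • b) := by
  refine ⟨⟨1 - c • b, 1 + c • a, ?_, ?_⟩, rfl⟩
  · rw [sub_mul, one_mul, mul_add, mul_one, smul_mul_smul_comm, mul_smul, ← hba, smul_sub]
    abel
  · rw [add_mul, one_mul, mul_sub, mul_one, smul_mul_smul_comm, mul_smul, ← hab, smul_sub]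
    abel

/-- A pseudoresolvent on `Ω`: a family satisfying the resolvent identity, which is all that is used
about the resolvent `l ↦ R(l, A)` of an unbounded operator. -/
def IsPseudoresolventOn {𝕜 𝒜 : Type*} [Field 𝕜] [Ring 𝒜] [Algebra 𝕜 𝒜] (R : 𝕜 → 𝒜) (Ω : Set 𝕜) :
    Prop :=
  ∀ ⦃l⦄, l ∈ Ω → ∀ ⦃m⦄, m ∈ Ω → R l - R m = (m - l) • (R l * R m)

namespace IsPseudoresolventOn

section Algebra

variable {𝕜 𝒜 : Type*} [Field 𝕜] [Ring 𝒜] [Algebra 𝕜 𝒜] {R : 𝕜 → 𝒜} {Ω : Set 𝕜} {l m : 𝕜}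

theorem commute (hR : IsPseudoresolventOn R Ω) (hl : l ∈ Ω) (hm : m ∈ Ω) :
    Commute (R l) (R m) := by
  rcases eq_or_ne m l with rfl | hml
  · exact Commute.refl _
  refine smul_right_injective 𝒜 (sub_ne_zero.2 hml) ?_
  calc (m - l) • (R l * R m) = -(R m - R l) := by rw [← hR hl hm, neg_sub]
    _ = (m - l) • (R m * R l) := by rw [hR hm hl, ← neg_smul, neg_sub]

theorem isUnit_one_sub (hR : IsPseudoresolventOn R Ω) (hl : l ∈ Ω) (hm : m ∈ Ω) :
    IsUnit (1 - (m - l) • R m) :=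
  isUnit_one_sub_smul (hR hl hm) ((hR.commute hl hm).eq ▸ hR hl hm)

theorem mul_right (hR : IsPseudoresolventOn R Ω) {e : 𝒜} (he : IsIdempotentElem e)
    (hcomm : ∀ l ∈ Ω, Commute (R l) e) : IsPseudoresolventOn (fun l => R l * e) Ω := by
  intro l hl m hm
  calc R l * e - R m * e = (m - l) • (R l * R m * e) := by
        rw [← sub_mul, hR hl hm, smul_mul_assoc]
    _ = (m - l) • (R l * e * (R m * e)) := by
        rw [mul_mul_mul_of_isIdempotentElem he (hcomm m hm)]

end Algebra

section Topology

variable {𝕜 𝒜 : Type*} [NontriviallyNormedField 𝕜] [NormedRing 𝒜] [NormedAlgebra 𝕜 𝒜]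
  {R : 𝕜 → 𝒜} {Ω : Set 𝕜} {l₀ m : 𝕜} {B P : 𝒜}

theorem isUnit_one_sub_of_tendsto (hR : IsPseudoresolventOn R Ω)
    (hΩ : ∀ᶠ l in 𝓝[≠] l₀, l ∈ Ω) (hB : Tendsto R (𝓝[≠] l₀) (𝓝 B)) (hm : m ∈ Ω) :
    IsUnit (1 - (m - l₀) • R m) := by
  have hl : Tendsto (fun l => m - l) (𝓝[≠] l₀) (𝓝 (m - l₀)) :=
    tendsto_nhdsWithin_of_tendsto_nhds (Continuous.tendsto (by fun_prop) l₀)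
  refine isUnit_one_sub_smul
    (tendsto_nhds_unique_of_eventuallyEq (hB.sub_const (R m)) (hl.smul (hB.mul_const (R m))) ?_)
    (tendsto_nhds_unique_of_eventuallyEq (hB.sub_const (R m)) (hl.smul (hB.const_mul (R m))) ?_)
  all_goals filter_upwards [hΩ] with l hl
  · exact hR hl hm
  · exact (hR.commute hl hm).eq ▸ hR hl hm

theorem residue_eq_smul_mul (hR : IsPseudoresolventOn R Ω) (hΩ : ∀ᶠ l in 𝓝[≠] l₀, l ∈ Ω)
    (hP : Tendsto (fun l => (l - l₀) • R l) (𝓝[≠] l₀) (𝓝 P)) (hm : m ∈ Ω) :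
    P = (m - l₀) • (R m * P) := by
  have hl : Tendsto (fun l => l - l₀) (𝓝[≠] l₀) (𝓝 0) :=
    tendsto_nhdsWithin_of_tendsto_nhds (by simpa using (continuous_sub_right l₀).tendsto l₀)
  have hl' : Tendsto (fun l => m - l) (𝓝[≠] l₀) (𝓝 (m - l₀)) :=
    tendsto_nhdsWithin_of_tendsto_nhds (Continuous.tendsto (by fun_prop) l₀)
  have hlim := tendsto_nhds_unique_of_eventuallyEq (hP.sub (hl.smul_const (R m)))
    (hl'.smul (hP.const_mul (R m))) ?_
  · rwa [zero_smul, sub_zero] at hlim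
  filter_upwards [hΩ] with l hl
  rw [← smul_sub, hR hl hm, (hR.commute hl hm).eq, mul_smul_comm, smul_comm]

theorem commute_residue (hR : IsPseudoresolventOn R Ω) (hΩ : ∀ᶠ l in 𝓝[≠] l₀, l ∈ Ω)
    (hP : Tendsto (fun l => (l - l₀) • R l) (𝓝[≠] l₀) (𝓝 P)) (hm : m ∈ Ω) :
    Commute (R m) P := by
  refine tendsto_nhds_unique_of_eventuallyEq (hP.const_mul (R m)) (hP.mul_const (R m)) ?_
  filter_upwards [hΩ] with l hl
  exact ((hR.commute hm hl).smul_right _).eq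

theorem isIdempotentElem_residue (hR : IsPseudoresolventOn R Ω) (hΩ : ∀ᶠ l in 𝓝[≠] l₀, l ∈ Ω)
    (hP : Tendsto (fun l => (l - l₀) • R l) (𝓝[≠] l₀) (𝓝 P)) : IsIdempotentElem P := by
  refine tendsto_nhds_unique_of_eventuallyEq (hP.mul_const P) tendsto_const_nhds ?_
  filter_upwards [hΩ] with l hl
  rw [smul_mul_assoc, ← hR.residue_eq_smul_mul hΩ hP hl]

theorem mul_residue (hR : IsPseudoresolventOn R Ω) (hΩ : ∀ᶠ l in 𝓝[≠] l₀, l ∈ Ω) (hl₀ : l₀ ∉ Ω)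
    (hP : Tendsto (fun l => (l - l₀) • R l) (𝓝[≠] l₀) (𝓝 P)) (hm : m ∈ Ω) :
    R m * P = (m - l₀)⁻¹ • P :=
  (eq_inv_smul_iff₀ (sub_ne_zero.2 (ne_of_mem_of_not_mem hm hl₀))).2
    (hR.residue_eq_smul_mul hΩ hP hm).symm

theorem isUnit_one_sub_mul_one_sub_residue (hR : IsPseudoresolventOn R Ω)
    (hΩ : ∀ᶠ l in 𝓝[≠] l₀, l ∈ Ω) (hl₀ : l₀ ∉ Ω)
    (hB : Tendsto (fun l => R l - (l - l₀)⁻¹ • P) (𝓝[≠] l₀) (𝓝 B)) {l : 𝕜}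
    (hl : l ∈ insert l₀ Ω) (hm : m ∈ Ω) : IsUnit (1 - (m - l) • (R m * (1 - P))) := by
  have hP := tendsto_sub_smul_of_tendsto_sub_inv_smul hB
  have hS : IsPseudoresolventOn (fun l => R l * (1 - P)) Ω :=
    hR.mul_right (hR.isIdempotentElem_residue hΩ hP).one_sub fun l hl =>
      (Commute.one_right _).sub_right (hR.commute_residue hΩ hP hl)
  rcases hl with rfl | hl
  · refine hS.isUnit_one_sub_of_tendsto hΩ (hB.congr' ?_) hm
    filter_upwards [hΩ] with l hl
    rw [mul_sub, mul_one, hR.mul_residue hΩ hl₀ hP hl]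
  · exact hS.isUnit_one_sub hl hm

end Topology

end IsPseudoresolventOn

end Pseudoresolvent

section Asymptotics

namespace IsNormContinuousSemigroup

variable {𝒜 : Type*} [NormedRing 𝒜] [NormedAlgebra ℂ 𝒜] [CompleteSpace 𝒜] {T : ℝ → 𝒜}
  {R : ℂ → 𝒜} {Ω : Set ℂ} {M ω μ t : ℝ} {l₀ : ℂ} {B P : 𝒜}

theorem mul_residue (hT : IsNormContinuousSemigroup T M ω) (hμ : ω < μ)
    (hR : IsPseudoresolventOn R Ω) (hμΩ : (μ : ℂ) ∈ Ω) (hRμ : R μ = laplaceTransform T μ)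
    (hΩ : ∀ᶠ l in 𝓝[≠] l₀, l ∈ Ω) (hl₀ : l₀ ∉ Ω)
    (hP : Tendsto (fun l => (l - l₀) • R l) (𝓝[≠] l₀) (𝓝 P)) (ht : 0 < t) :
    T t * P = Complex.exp (l₀ * t) • P :=
  hT.mul_eq_exp_smul hμ (ne_of_mem_of_not_mem hμΩ hl₀)
    (hRμ ▸ hR.mul_residue hΩ hl₀ hP hμΩ) ht

theorem commute_residue (hT : IsNormContinuousSemigroup T M ω) (hμ : ω < μ)
    (hR : IsPseudoresolventOn R Ω) (hμΩ : (μ : ℂ) ∈ Ω) (hRμ : R μ = laplaceTransform T μ)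
    (hΩ : ∀ᶠ l in 𝓝[≠] l₀, l ∈ Ω) (hl₀ : l₀ ∉ Ω)
    (hP : Tendsto (fun l => (l - l₀) • R l) (𝓝[≠] l₀) (𝓝 P)) (ht : 0 < t) :
    Commute (T t) P :=
  (hT.mul_residue hμ hR hμΩ hRμ hΩ hl₀ hP ht).trans
    (hT.mul_eq_exp_smul' hμ (ne_of_mem_of_not_mem hμΩ hl₀)
      (hRμ ▸ (hR.commute_residue hΩ hP hμΩ).eq.symm.trans (hR.mul_residue hΩ hl₀ hP hμΩ)) ht).symm

theorem exists_norm_sub_exp_smul_residue_le (hT : IsNormContinuousSemigroup T M ω) (hμ : ω < μ)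
    (hR : IsPseudoresolventOn R Ω) (hμΩ : (μ : ℂ) ∈ Ω) (hRμ : R μ = laplaceTransform T μ)
    (hΩ : ∀ᶠ l in 𝓝[≠] l₀, l ∈ Ω) (hl₀ : l₀ ∉ Ω)
    (hB : Tendsto (fun l => R l - (l - l₀)⁻¹ • P) (𝓝[≠] l₀) (𝓝 B)) {α β : ℝ}
    (hα : {l : ℂ | α ≤ l.re} ⊆ insert l₀ Ω) (hαβ : α < β) :
    ∃ C, ∀ t, 0 < t → ‖T t - Complex.exp (l₀ * t) • P‖ ≤ C * Real.exp (β * t) := by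
  have hP := tendsto_sub_smul_of_tendsto_sub_inv_smul hB
  have hU : IsNormContinuousSemigroup (fun t => T t * (1 - P)) (M * ‖1 - P‖) ω :=
    hT.mul_right (hR.isIdempotentElem_residue hΩ hP).one_sub fun t ht =>
      (Commute.one_right _).sub_right (hT.commute_residue hμ hR hμΩ hRμ hΩ hl₀ hP ht)
  obtain ⟨C, hC⟩ := hU.exists_norm_le_of_forall_isUnit hμ hαβ fun a ha => by
    rw [← hT.laplaceTransform_mul hμ, ← hRμ]
    exact hR.isUnit_one_sub_mul_one_sub_residue hΩ hl₀ hB (hα ha) hμΩ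
  refine ⟨C, fun t ht => ?_⟩
  rw [← hT.mul_residue hμ hR hμΩ hRμ hΩ hl₀ hP ht, ← mul_one_sub]
  exact hC t ht

end IsNormContinuousSemigroup

end Asymptotics

section Operators

variable {E : Type*} [NormedAddCommGroup E] [NormedSpace ℂ E] {A : E →ₗ.[ℂ] E}

theorem IsResolventOf.sub_eq_smul_mul {l m : ℂ} {R S : E →L[ℂ] E} (hR : IsResolventOf A l R)
    (hS : IsResolventOf A m S) : R - S = (m - l) • (R * S) := by
  ext x
  obtain ⟨hx, hSx⟩ := hS.1 x
  have hASx : A ⟨S x, hx⟩ = m • S x - x := by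
    rw [eq_sub_iff_add_eq', ← sub_eq_iff_eq_add.1 hSx]
  have hRSx : R (l • S x - (m • S x - x)) = S x := hASx ▸ hR.2 ⟨S x, hx⟩
  calc R x - S x = R x - R (l • S x - (m • S x - x)) := by rw [hRSx]
    _ = R ((m - l) • S x) := by rw [← map_sub, sub_smul]; congr 1; abel
    _ = (m - l) • R (S x) := map_smul _ _ _

theorem isPseudoresolventOn_of_isResolventOf {R : ℂ → E →L[ℂ] E} {Ω : Set ℂ}
    (hR : ∀ l ∈ Ω, IsResolventOf A l (R l)) : IsPseudoresolventOn R Ω :=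
  fun _ hl _ hm => (hR _ hl).sub_eq_smul_mul (hR _ hm)

theorem IsResolventOf.unique {l : ℂ} {R S : E →L[ℂ] E} (hR : IsResolventOf A l R)
    (hS : IsResolventOf A l S) : R = S :=
  sub_eq_zero.1 (by rw [hR.sub_eq_smul_mul hS, sub_self, zero_smul])

theorem IsGeneratorOf.isResolventOf_laplaceTransform {T : ℝ → E →L[ℂ] E} {M ω μ : ℝ}
    (hgen : IsGeneratorOf A T ω) (hT : IsNormContinuousSemigroup T M ω) (hμ : ω < μ) :
    IsResolventOf A μ (laplaceTransform T μ) := by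
  obtain ⟨R, hR, hintegral⟩ := hgen μ hμ
  have hRT : R = laplaceTransform T μ := ContinuousLinearMap.ext fun x => by
    rw [hintegral, laplaceTransform, ContinuousLinearMap.integral_apply (hT.integrableOn hμ)]
    rfl
  exact hRT ▸ hR

theorem IsSemigroupOfType.isNormContinuousSemigroup {T : ℝ → E →L[ℂ] E} {M ω : ℝ}
    (hT : IsSemigroupOfType T M ω) (hc : ContinuousOn T (Ioi 0)) :
    IsNormContinuousSemigroup T M ω :=
  ⟨hc, hT.2.1, hT.2.2.1.2⟩

theorem IsHolomorphicSG.continuousOn {T : ℝ → E →L[ℂ] E} (hT : IsHolomorphicSG T) :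
    ContinuousOn T (Ioi 0) := by
  obtain ⟨θ, hθ, -, S, hS, hST, -⟩ := hT
  have hmaps : MapsTo (fun t : ℝ => (t : ℂ)) (Ioi 0) (Sector θ) := fun t ht =>
    ⟨Complex.ofReal_ne_zero.2 (ne_of_gt ht), by
      rwa [Complex.arg_ofReal_of_nonneg (le_of_lt ht), abs_zero]⟩
  exact (hS.continuousOn.comp Complex.continuous_ofReal.continuousOn hmaps).congr
    fun t ht => (hST t ht).symm

/-- The resolvent of `A` has at `l₀` a pole of order at most one, with residue `P`: near `l₀` it has
the Laurent expansion `R(l, A) = (l - l₀)⁻¹ P + ∑_{n ≥ 0} (l - l₀)ⁿ Bₙ`. The case `P = 0` is a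
removable singularity. -/
def ResolventHasSimplePoleAt (A : E →ₗ.[ℂ] E) (l₀ : ℂ) (P : E →L[ℂ] E) : Prop :=
  ∃ B : ℕ → E →L[ℂ] E, ∀ᶠ l in 𝓝[≠] l₀, ∃ R : E →L[ℂ] E, IsResolventOf A l R ∧
    HasSum (fun n : ℕ => (l - l₀) ^ n • B n) (R - (l - l₀)⁻¹ • P)

theorem resolventHasSimplePoleAt_zero {P : E →L[ℂ] E} {B : ℕ → E →L[ℂ] E} {r : ℝ} (hr : 0 < r)
    (hB : ∀ l : ℂ, l ≠ 0 → ‖l‖ < r → ∃ R : E →L[ℂ] E, IsResolventOf A l R ∧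
      HasSum (fun n : ℕ => l ^ n • B n) (R - l⁻¹ • P)) :
    ResolventHasSimplePoleAt A 0 P := by
  refine ⟨B, eventually_nhdsWithin_iff.2 ?_⟩
  filter_upwards [Metric.ball_mem_nhds 0 hr] with l hl hne
  simpa only [sub_zero] using hB l hne (mem_ball_zero_iff.1 hl)

theorem ResolventHasSimplePoleAt.exists_tendsto {l₀ : ℂ} {P : E →L[ℂ] E} {R : ℂ → E →L[ℂ] E}
    (hP : ResolventHasSimplePoleAt A l₀ P) (hR : ∀ᶠ l in 𝓝[≠] l₀, IsResolventOf A l (R l)) :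
    ∃ B, Tendsto (fun l => R l - (l - l₀)⁻¹ • P) (𝓝[≠] l₀) (𝓝 B) := by
  obtain ⟨B, hB⟩ := hP
  refine ⟨B 0, tendsto_of_hasSum_pow_smul ?_⟩
  filter_upwards [hR, hB] with l hRl ⟨S, hS, hsum⟩
  rwa [hRl.unique hS]

theorem convergence_to_spectral_projection_general [CompleteSpace E] {T : ℝ → E →L[ℂ] E}
    {P : E →L[ℂ] E} {M ω α : ℝ} {l₀ : ℂ} (hT : IsNormContinuousSemigroup T M ω)
    (hgen : IsGeneratorOf A T ω) (hα : α < l₀.re)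
    (hspec : spectrumOf A ∩ {l | α ≤ l.re} ⊆ {l₀}) (hpole : ResolventHasSimplePoleAt A l₀ P) :
    (∀ t : ℝ, 0 < t → (T t).comp P = Complex.exp (l₀ * t) • P) ∧
      ∀ β, α < β → ∃ C, 1 ≤ C ∧ ∀ t : ℝ, 0 < t →
        ‖T t - Complex.exp (l₀ * t) • P‖ ≤ C * Real.exp (β * t) := by
  set Ω : Set ℂ := {l | α ≤ l.re ∧ l ≠ l₀}
  have hresolvent : ∀ l ∈ Ω, ∃ R : E →L[ℂ] E, IsResolventOf A l R := fun l hl =>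
    not_not.1 fun h => hl.2 (hspec ⟨h, hl.1⟩)
  choose! R hR using hresolvent
  have hpseudo : IsPseudoresolventOn R Ω := isPseudoresolventOn_of_isResolventOf hR
  have hΩ : ∀ᶠ l in 𝓝[≠] l₀, l ∈ Ω := by
    filter_upwards [self_mem_nhdsWithin,
      nhdsWithin_le_nhds (Complex.continuous_re.continuousAt.eventually (lt_mem_nhds hα))]
      with l hne hre using ⟨hre.le, hne⟩
  have hl₀ : l₀ ∉ Ω := fun h => h.2 rfl
  obtain ⟨μ, hμ⟩ := exists_gt (max ω l₀.re)
  have hωμ : ω < μ := (le_max_left _ _).trans_lt hμ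
  have hl₀μ : l₀.re < μ := (le_max_right _ _).trans_lt hμ
  have hμΩ : (μ : ℂ) ∈ Ω := ⟨(hα.trans hl₀μ).le, fun h => hl₀μ.ne (by simp [← h])⟩
  have hRμ : R μ = laplaceTransform T μ :=
    (hR μ hμΩ).unique (hgen.isResolventOf_laplaceTransform hT hωμ)
  obtain ⟨B, hB⟩ := hpole.exists_tendsto (hΩ.mono hR)
  refine ⟨fun t ht => hT.mul_residue hωμ hpseudo hμΩ hRμ hΩ hl₀
    (tendsto_sub_smul_of_tendsto_sub_inv_smul hB) ht, fun β hβ => ?_⟩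
  obtain ⟨C, hC⟩ := hT.exists_norm_sub_exp_smul_residue_le hωμ hpseudo hμΩ hRμ hΩ hl₀ hB
    (fun l hl => or_iff_not_imp_left.2 fun hne => ⟨hl, hne⟩) hβ
  exact ⟨max C 1, le_max_right _ _, fun t ht => (hC t ht).trans (by gcongr; exact le_max_left _ _)⟩

end Operators

/-- if `A` generates a holomorphic semigroup `T`, the spectrum of `A` in the
half plane `{Re λ ≥ -ε}` is exactly `{0}`, and `0` is a first order pole of the resolvent
with residue `P` (so that near `0` the resolvent has the Laurent expansion
`R(λ, A) = λ⁻¹ P + ∑_{n ≥ 0} λ^n B_n` with `P ≠ 0`), then `T(t) P = P` for all `t > 0` and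
`‖T(t) - P‖ ≤ M e^{-ε' t}` for some `M ≥ 1`, `ε' > 0` and all `t > 0`. -/
theorem convergence_to_spectral_projection
    (A : X →ₗ.[ℂ] X) (T : ℝ → X →L[ℂ] X) (P : X →L[ℂ] X)
    (hgen : Generates A T) (hhol : IsHolomorphicSG T)
    (ε : ℝ) (hε : 0 < ε)
    (hspec : spectrumOf A ∩ {l : ℂ | -ε ≤ l.re} = {0})
    (hP : P ≠ 0)
    (hpole : ∃ r : ℝ, 0 < r ∧ ∃ B : ℕ → X →L[ℂ] X,
      ∀ l : ℂ, l ≠ 0 → ‖l‖ < r →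
        ∃ R : X →L[ℂ] X, IsResolventOf A l R ∧
          HasSum (fun n : ℕ => l ^ n • B n) (R - l⁻¹ • P)) :
    (∀ t : ℝ, 0 < t → (T t).comp P = P) ∧
    (∃ M ε' : ℝ, 1 ≤ M ∧ 0 < ε' ∧ ∀ t : ℝ, 0 < t →
      ‖T t - P‖ ≤ M * Real.exp (-ε' * t)) := by
  obtain ⟨M, ω, hT, hA⟩ := hgen
  obtain ⟨r, hr, B, hB⟩ := hpole
  have hmain := convergence_to_spectral_projection_general
    (hT.isNormContinuousSemigroup hhol.continuousOn) hA (neg_lt_zero.2 hε) hspec.subset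
    (resolventHasSimplePoleAt_zero hr hB)
  simp only [zero_mul, Complex.exp_zero, one_smul] at hmain
  obtain ⟨C, hC, hTC⟩ := hmain.2 (-(ε / 2)) (by linarith)
  exact ⟨hmain.1, C, ε / 2, hC, half_pos hε, hTC⟩
end
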